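/- arXiv:1704.05373 — 2 statements merged into one kernel-verified Lean document; each statement's English description precedes it below -/
import Mathlib

section
/- Let a, b, c be positive real numbers satisfying the strict triangle inequalities a < b + c, b < a + c, c < a + b. Then 2·sinh(a/2)·sinh(b/2)·sinh(c/2)/(sinh((a+b-c)/2)·sinh((a+c-b)/2)·sinh((b+c-a)/2)) ≥ 2·sinh((a+b)/4)·sinh((a+c)/4)·sinh((b+c)/4)/(sinh(a/2)·sinh(b/2)·sinh(c/2)) ≥ 2, with equality throughout if and only if a = b = c. -/
/-!
The inequalities hold for every positive function `g` with `log ∘ g` concave, not only for `sinh`.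
Write `u, v, w` for the half-sides and `f = log ∘ g`. The second inequality is concavity of `f` at
the midpoints of the half-sides, and strict concavity gives the case of equality. For the first,
Popoviciu's inequality at `u + v - w`, `u + w - v`, `v + w - u`, whose midpoints are `u, v, w`,
bounds `3 f(m)` from above, where `m = (u + v + w) / 3`; Jensen's inequality at the midpoints of
`u, v, w` bounds it from below.
-/

section Concave

variable {𝕜 : Type*} [Field 𝕜] [LinearOrder 𝕜] [IsStrictOrderedRing 𝕜]

-- On the segment `f` lies above its chord from `p` to `q`; the weighted values of the chord at
-- `u`, `v` and at `p`, `q` agree, since the chord is affine.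
theorem weighted_map_endpoints_le_of_concaveOn {E : Type*} [AddCommGroup E] [Module 𝕜 E]
    {S : Set E} {f : E → 𝕜} (hf : ConcaveOn 𝕜 S f) {p q u v : E} {α β γ δ : 𝕜}
    (hp : p ∈ S) (hq : q ∈ S) (hu : u ∈ segment 𝕜 p q) (hv : v ∈ segment 𝕜 p q)
    (hγ : 0 ≤ γ) (hδ : 0 ≤ δ) (hweight : α + β = γ + δ)
    (hbary : α • p + β • q = γ • u + δ • v) :
    α * f p + β * f q ≤ γ * f u + δ * f v := by
  obtain rfl | hpq := eq_or_ne p q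
  · rw [segment_same, Set.mem_singleton_iff] at hu hv
    rw [hu, hv, ← add_mul, ← add_mul, hweight]
  obtain ⟨s', s, hs', hs, hss, rfl⟩ := hu
  obtain ⟨t', t, ht', ht, htt, rfl⟩ := hv
  obtain rfl : s' = 1 - s := eq_sub_of_add_eq hss
  obtain rfl : t' = 1 - t := eq_sub_of_add_eq htt
  have hβ : γ * s + δ * t = β := by
    obtain rfl : α = γ + δ - β := eq_sub_of_add_eq hweight
    have hzero : (γ * s + δ * t - β) • (p - q) = 0 := by
      rw [← sub_eq_zero.2 hbary]
      module
    exact sub_eq_zero.1 ((smul_eq_zero.1 hzero).resolve_right (sub_ne_zero.2 hpq))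
  have hfu := mul_le_mul_of_nonneg_left (hf.2 hp hq hs' hs hss) hγ
  have hfv := mul_le_mul_of_nonneg_left (hf.2 hp hq ht' ht htt) hδ
  simp only [smul_eq_mul] at hfu hfv
  calc α * f p + β * f q
      = γ * ((1 - s) * f p + s * f q) + δ * ((1 - t) * f p + t * f q) := by
        linear_combination f p * hweight + (f p - f q) * hβ
    _ ≤ γ * f ((1 - s) • p + s • q) + δ * f ((1 - t) • p + t • q) := add_le_add hfu hfv

variable {S : Set 𝕜} {f : 𝕜 → 𝕜} {x y z u v w : 𝕜}

theorem half_add_mem_of_convex (hS : Convex 𝕜 S) (hx : x ∈ S) (hy : y ∈ S) : (x + y) / 2 ∈ S := by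
  have h := hS.midpoint_mem hx hy
  rwa [midpoint_eq_smul_add, smul_eq_mul, invOf_eq_inv, inv_mul_eq_div] at h

theorem map_add_map_le_of_concaveOn (hf : ConcaveOn 𝕜 S f) (hx : x ∈ S) (hy : y ∈ S) :
    f x + f y ≤ 2 * f ((x + y) / 2) := by
  have h := hf.2 hx hy one_half_pos.le one_half_pos.le (add_halves 1)
  rw [← smul_add, ← smul_add, smul_eq_mul, smul_eq_mul, one_div_mul_eq_div,
    one_div_mul_eq_div] at h
  linarith

theorem map_add_map_lt_of_strictConcaveOn (hf : StrictConcaveOn 𝕜 S f) (hx : x ∈ S)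
    (hy : y ∈ S) (hxy : x ≠ y) : f x + f y < 2 * f ((x + y) / 2) := by
  have h := hf.2 hx hy hxy one_half_pos one_half_pos (add_halves 1)
  rw [← smul_add, ← smul_add, smul_eq_mul, smul_eq_mul, one_div_mul_eq_div,
    one_div_mul_eq_div] at h
  linarith

theorem sum_map_le_three_mul_map_mean_of_concaveOn (hf : ConcaveOn 𝕜 S f) (hx : x ∈ S) (hy : y ∈ S)
    (hz : z ∈ S) : f x + f y + f z ≤ 3 * f ((x + y + z) / 3) := by
  have hxy := map_add_map_le_of_concaveOn hf hx hy
  have hxyz := hf.2 (half_add_mem_of_convex hf.1 hx hy) hz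
    (show (0 : 𝕜) ≤ 2 / 3 by norm_num) (show (0 : 𝕜) ≤ 1 / 3 by norm_num) (by norm_num)
  simp only [smul_eq_mul] at hxyz
  rw [show 2 / 3 * ((x + y) / 2) + 1 / 3 * z = (x + y + z) / 3 by ring] at hxyz
  linarith

-- The mean `m` splits `[x, z]`. Two of the three midpoints lie on the side of `m` not containing
-- `y`, where the chord of `f` bounds them below; plain concavity handles the third midpoint.
theorem popoviciu_of_concaveOn_of_le (hf : ConcaveOn 𝕜 S f) (hx : x ∈ S) (hy : y ∈ S)
    (hz : z ∈ S) (hxy : x ≤ y) (hyz : y ≤ z) :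
    f x + f y + f z + 3 * f ((x + y + z) / 3) ≤
      2 * (f ((x + y) / 2) + f ((x + z) / 2) + f ((y + z) / 2)) := by
  set m := (x + y + z) / 3 with hm
  have hxm : x ≤ m := by linarith
  have hmz : m ≤ z := by linarith
  have hmS : m ∈ S := hf.1.ordConnected.out hx hz ⟨hxm, hmz⟩
  obtain hym | hmy := le_total y m
  · have hchord : 3 * f m + 1 * f z ≤ 2 * f ((x + z) / 2) + 2 * f ((y + z) / 2) :=
      weighted_map_endpoints_le_of_concaveOn hf hmS hz
        (segment_eq_Icc hmz ▸ ⟨by linarith, by linarith⟩)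
        (segment_eq_Icc hmz ▸ ⟨by linarith, by linarith⟩)
        zero_le_two zero_le_two (by norm_num) (by simp only [smul_eq_mul]; linarith)
    linarith [map_add_map_le_of_concaveOn hf hx hy]
  · have hchord : 1 * f x + 3 * f m ≤ 2 * f ((x + y) / 2) + 2 * f ((x + z) / 2) :=
      weighted_map_endpoints_le_of_concaveOn hf hx hmS
        (segment_eq_Icc hxm ▸ ⟨by linarith, by linarith⟩)
        (segment_eq_Icc hxm ▸ ⟨by linarith, by linarith⟩)
        zero_le_two zero_le_two (by norm_num) (by simp only [smul_eq_mul]; linarith)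
    linarith [map_add_map_le_of_concaveOn hf hy hz]

theorem popoviciu_of_concaveOn (hf : ConcaveOn 𝕜 S f) (hx : x ∈ S) (hy : y ∈ S) (hz : z ∈ S) :
    f x + f y + f z + 3 * f ((x + y + z) / 3) ≤
      2 * (f ((x + y) / 2) + f ((x + z) / 2) + f ((y + z) / 2)) := by
  wlog hxz : x ≤ z generalizing x z
  · simpa only [add_comm, add_left_comm, add_assoc] using this hz hx (le_of_not_ge hxz)
  obtain hxy | hyx := le_total x y
  · obtain hyz | hzy := le_total y z
    · exact popoviciu_of_concaveOn_of_le hf hx hy hz hxy hyz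
    · simpa only [add_comm, add_left_comm, add_assoc] using
        popoviciu_of_concaveOn_of_le hf hx hz hy hxz hzy
  · simpa only [add_comm, add_left_comm, add_assoc] using
      popoviciu_of_concaveOn_of_le hf hy hx hz hyx hxz

theorem mem_and_mem_and_mem_of_add_sub_mem (hS : Convex 𝕜 S)
    (huv : u + v - w ∈ S) (huw : u + w - v ∈ S) (hvw : v + w - u ∈ S) :
    u ∈ S ∧ v ∈ S ∧ w ∈ S := by
  refine ⟨?_, ?_, ?_⟩
  · convert half_add_mem_of_convex hS huv huw using 1
    ring
  · convert half_add_mem_of_convex hS huv hvw using 1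
    ring
  · convert half_add_mem_of_convex hS huw hvw using 1
    ring

theorem sum_map_add_sum_map_half_add_le_of_concaveOn (hf : ConcaveOn 𝕜 S f)
    (huv : u + v - w ∈ S) (huw : u + w - v ∈ S) (hvw : v + w - u ∈ S) :
    f (u + v - w) + f (u + w - v) + f (v + w - u) +
        (f ((u + v) / 2) + f ((u + w) / 2) + f ((v + w) / 2)) ≤
      2 * (f u + f v + f w) := by
  obtain ⟨hu, hv, hw⟩ := mem_and_mem_and_mem_of_add_sub_mem hf.1 huv huw hvw
  have hpopoviciu := popoviciu_of_concaveOn hf huv huw hvw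
  rw [show (u + v - w + (u + w - v)) / 2 = u by ring,
    show (u + v - w + (v + w - u)) / 2 = v by ring,
    show (u + w - v + (v + w - u)) / 2 = w by ring,
    show u + v - w + (u + w - v) + (v + w - u) = u + v + w by ring] at hpopoviciu
  have hjensen := sum_map_le_three_mul_map_mean_of_concaveOn hf (half_add_mem_of_convex hf.1 hu hv)
    (half_add_mem_of_convex hf.1 hu hw) (half_add_mem_of_convex hf.1 hv hw)
  rw [show (u + v) / 2 + (u + w) / 2 + (v + w) / 2 = u + v + w by ring] at hjensen
  linarith

theorem sum_map_le_sum_map_half_add_of_concaveOn (hf : ConcaveOn 𝕜 S f) (hu : u ∈ S) (hv : v ∈ S)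
    (hw : w ∈ S) :
    f u + f v + f w ≤ f ((u + v) / 2) + f ((u + w) / 2) + f ((v + w) / 2) := by
  linarith [map_add_map_le_of_concaveOn hf hu hv,
    map_add_map_le_of_concaveOn hf hu hw, map_add_map_le_of_concaveOn hf hv hw]

theorem eq_and_eq_of_sum_map_half_add_eq_of_strictConcaveOn (hf : StrictConcaveOn 𝕜 S f)
    (hu : u ∈ S) (hv : v ∈ S) (hw : w ∈ S)
    (h : f ((u + v) / 2) + f ((u + w) / 2) + f ((v + w) / 2) = f u + f v + f w) :
    u = v ∧ v = w := by
  have huv := map_add_map_le_of_concaveOn hf.concaveOn hu hv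
  have huw := map_add_map_le_of_concaveOn hf.concaveOn hu hw
  have hvw := map_add_map_le_of_concaveOn hf.concaveOn hv hw
  constructor <;> by_contra hne
  · linarith [map_add_map_lt_of_strictConcaveOn hf hu hv hne]
  · linarith [map_add_map_lt_of_strictConcaveOn hf hv hw hne]

end Concave

section LogConcave

theorem log_mul_mul {x y z : ℝ} (hx : x ≠ 0) (hy : y ≠ 0) (hz : z ≠ 0) :
    Real.log (x * y * z) = Real.log x + Real.log y + Real.log z := by
  rw [Real.log_mul (mul_ne_zero hx hy) hz, Real.log_mul hx hy]

variable {S : Set ℝ} {g : ℝ → ℝ} {u v w : ℝ}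

theorem prod_mul_prod_half_add_le_of_concaveOn_log (hpos : ∀ x ∈ S, 0 < g x)
    (hg : ConcaveOn ℝ S fun x => Real.log (g x))
    (huv : u + v - w ∈ S) (huw : u + w - v ∈ S) (hvw : v + w - u ∈ S) :
    g (u + v - w) * g (u + w - v) * g (v + w - u) *
        (g ((u + v) / 2) * g ((u + w) / 2) * g ((v + w) / 2)) ≤
      (g u * g v * g w) ^ 2 := by
  obtain ⟨hu, hv, hw⟩ := mem_and_mem_and_mem_of_add_sub_mem hg.1 huv huw hvw
  have hsum := sum_map_add_sum_map_half_add_le_of_concaveOn hg huv huw hvw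
  have gu := hpos u hu
  have gv := hpos v hv
  have gw := hpos w hw
  have guv := hpos _ huv
  have guw := hpos _ huw
  have gvw := hpos _ hvw
  have muv := hpos _ (half_add_mem_of_convex hg.1 hu hv)
  have muw := hpos _ (half_add_mem_of_convex hg.1 hu hw)
  have mvw := hpos _ (half_add_mem_of_convex hg.1 hv hw)
  rwa [← Real.log_le_log_iff (by positivity) (by positivity), Real.log_pow,
    Real.log_mul (by positivity) (by positivity), log_mul_mul guv.ne' guw.ne' gvw.ne',
    log_mul_mul muv.ne' muw.ne' mvw.ne', log_mul_mul gu.ne' gv.ne' gw.ne', Nat.cast_ofNat]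

theorem prod_le_prod_half_add_of_concaveOn_log (hpos : ∀ x ∈ S, 0 < g x)
    (hg : ConcaveOn ℝ S fun x => Real.log (g x)) (hu : u ∈ S) (hv : v ∈ S) (hw : w ∈ S) :
    g u * g v * g w ≤ g ((u + v) / 2) * g ((u + w) / 2) * g ((v + w) / 2) := by
  have hsum := sum_map_le_sum_map_half_add_of_concaveOn hg hu hv hw
  have muv := hpos _ (half_add_mem_of_convex hg.1 hu hv)
  have muw := hpos _ (half_add_mem_of_convex hg.1 hu hw)
  have mvw := hpos _ (half_add_mem_of_convex hg.1 hv hw)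
  have gu := hpos u hu
  have gv := hpos v hv
  have gw := hpos w hw
  rwa [← Real.log_le_log_iff (by positivity) (by positivity), log_mul_mul gu.ne' gv.ne' gw.ne',
    log_mul_mul muv.ne' muw.ne' mvw.ne']

theorem eq_and_eq_of_prod_half_add_eq_of_strictConcaveOn_log (hpos : ∀ x ∈ S, 0 < g x)
    (hg : StrictConcaveOn ℝ S fun x => Real.log (g x)) (hu : u ∈ S) (hv : v ∈ S) (hw : w ∈ S)
    (h : g ((u + v) / 2) * g ((u + w) / 2) * g ((v + w) / 2) = g u * g v * g w) :
    u = v ∧ v = w := by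
  have hmid {x y : ℝ} (hx : x ∈ S) (hy : y ∈ S) : g ((x + y) / 2) ≠ 0 :=
    (hpos _ (half_add_mem_of_convex hg.1 hx hy)).ne'
  apply eq_and_eq_of_sum_map_half_add_eq_of_strictConcaveOn hg hu hv hw
  rw [← log_mul_mul (hpos u hu).ne' (hpos v hv).ne' (hpos w hw).ne',
    ← log_mul_mul (hmid hu hv) (hmid hu hw) (hmid hv hw), h]

/-- The half-sides are `u`, `v`, `w`; `g x = x`, `sinh x`, `sin x` are the Euclidean, hyperbolic
and spherical cases. -/
theorem stmt_11_general (hpos : ∀ x ∈ S, 0 < g x)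
    (hg : StrictConcaveOn ℝ S fun x => Real.log (g x))
    (huv : u + v - w ∈ S) (huw : u + w - v ∈ S) (hvw : v + w - u ∈ S) :
    2 * g u * g v * g w / (g (u + v - w) * g (u + w - v) * g (v + w - u)) ≥
      2 * g ((u + v) / 2) * g ((u + w) / 2) * g ((v + w) / 2) / (g u * g v * g w) ∧
    2 * g ((u + v) / 2) * g ((u + w) / 2) * g ((v + w) / 2) / (g u * g v * g w) ≥ 2 ∧
    ((2 * g u * g v * g w / (g (u + v - w) * g (u + w - v) * g (v + w - u)) =
        2 * g ((u + v) / 2) * g ((u + w) / 2) * g ((v + w) / 2) / (g u * g v * g w) ∧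
      2 * g ((u + v) / 2) * g ((u + w) / 2) * g ((v + w) / 2) / (g u * g v * g w) = 2) ↔
      u = v ∧ v = w) := by
  obtain ⟨hu, hv, hw⟩ := mem_and_mem_and_mem_of_add_sub_mem hg.1 huv huw hvw
  have hsides : 0 < g u * g v * g w :=
    mul_pos (mul_pos (hpos u hu) (hpos v hv)) (hpos w hw)
  have hdiffs : 0 < g (u + v - w) * g (u + w - v) * g (v + w - u) :=
    mul_pos (mul_pos (hpos _ huv) (hpos _ huw)) (hpos _ hvw)
  refine ⟨?_, ?_, ?_, ?_⟩
  · rw [ge_iff_le, div_le_div_iff₀ hsides hdiffs]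
    linarith [prod_mul_prod_half_add_le_of_concaveOn_log hpos hg.concaveOn huv huw hvw]
  · rw [ge_iff_le, le_div_iff₀ hsides]
    linarith [prod_le_prod_half_add_of_concaveOn_log hpos hg.concaveOn hu hv hw]
  · rintro ⟨-, h⟩
    rw [div_eq_iff hsides.ne'] at h
    exact eq_and_eq_of_prod_half_add_eq_of_strictConcaveOn_log hpos hg hu hv hw (by linarith)
  · rintro ⟨rfl, rfl⟩
    have hratio : 2 * g u * g u * g u / (g u * g u * g u) = 2 := by
      rw [div_eq_iff hsides.ne']
      ring
    rw [add_sub_cancel_right, add_self_div_two]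
    exact ⟨rfl, hratio⟩

end LogConcave

theorem strictConcaveOn_log_sinh :
    StrictConcaveOn ℝ (Set.Ioi 0) fun x => Real.log (Real.sinh x) := by
  have hderiv (x : ℝ) (hx : 0 < x) :
      HasDerivAt (fun x => Real.log (Real.sinh x)) (Real.cosh x / Real.sinh x) x :=
    (Real.hasDerivAt_sinh x).log (Real.sinh_pos_iff.2 hx).ne'
  refine StrictAntiOn.strictConcaveOn_of_deriv (convex_Ioi 0)
    (fun x hx => (hderiv x hx).continuousAt.continuousWithinAt) ?_
  rw [interior_Ioi]
  intro x hx y hy hxy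
  rw [(hderiv x hx).deriv, (hderiv y hy).deriv,
    div_lt_div_iff₀ (Real.sinh_pos_iff.2 hy) (Real.sinh_pos_iff.2 hx)]
  have hsinh_sub : 0 < Real.sinh (y - x) := Real.sinh_pos_iff.2 (sub_pos.2 hxy)
  rw [Real.sinh_sub] at hsinh_sub
  linarith

theorem stmt_11 (a b c : ℝ) (ha : 0 < a) (hb : 0 < b) (hc : 0 < c)
    (hab : a < b + c) (hbc : b < a + c) (hca : c < a + b) :
    2 * Real.sinh (a / 2) * Real.sinh (b / 2) * Real.sinh (c / 2) /
        (Real.sinh ((a + b - c) / 2) * Real.sinh ((a + c - b) / 2) *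
          Real.sinh ((b + c - a) / 2)) ≥
      2 * Real.sinh ((a + b) / 4) * Real.sinh ((a + c) / 4) * Real.sinh ((b + c) / 4) /
        (Real.sinh (a / 2) * Real.sinh (b / 2) * Real.sinh (c / 2)) ∧
    2 * Real.sinh ((a + b) / 4) * Real.sinh ((a + c) / 4) * Real.sinh ((b + c) / 4) /
        (Real.sinh (a / 2) * Real.sinh (b / 2) * Real.sinh (c / 2)) ≥ 2 ∧
    ((2 * Real.sinh (a / 2) * Real.sinh (b / 2) * Real.sinh (c / 2) /
        (Real.sinh ((a + b - c) / 2) * Real.sinh ((a + c - b) / 2) *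
          Real.sinh ((b + c - a) / 2)) =
      2 * Real.sinh ((a + b) / 4) * Real.sinh ((a + c) / 4) * Real.sinh ((b + c) / 4) /
        (Real.sinh (a / 2) * Real.sinh (b / 2) * Real.sinh (c / 2)) ∧
      2 * Real.sinh ((a + b) / 4) * Real.sinh ((a + c) / 4) * Real.sinh ((b + c) / 4) /
        (Real.sinh (a / 2) * Real.sinh (b / 2) * Real.sinh (c / 2)) = 2) ↔
      a = b ∧ b = c) := by
  have h := stmt_11_general (u := a / 2) (v := b / 2) (w := c / 2)
    (fun x => Real.sinh_pos_iff.2) strictConcaveOn_log_sinh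
    (show 0 < a / 2 + b / 2 - c / 2 by linarith) (show 0 < a / 2 + c / 2 - b / 2 by linarith)
    (show 0 < b / 2 + c / 2 - a / 2 by linarith)
  simpa only [← add_div, ← sub_div, div_div, show (2 * 2 : ℝ) = 4 by norm_num,
    div_left_inj' (two_ne_zero' ℝ)] using h
end

section
/- Let a, b, c be positive real numbers satisfying the strict triangle inequalities a < b + c, b < a + c, c < a + b, and write hₐ = sinh(a/2), h_b = sinh(b/2), h_c = sinh(c/2). Then (hₐ·h_b·h_c + hₐ³ + h_b³ + h_c³)/(2·hₐ·h_b·h_c) ≥ (1/2)(hₐ/h_b + h_b/hₐ + hₐ/h_c + h_c/hₐ + h_b/h_c + h_c/h_b) − 1 ≥ (1/3)(hₐ/h_b + h_b/hₐ + hₐ/h_c + h_c/hₐ + h_b/h_c + h_c/h_b) ≥ 2. -/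
/-! Writing the ratios over the common denominator `2 * x * y * z`, the first inequality becomes
Schur's inequality of degree one. The other two both say that the sum of the six ratios is at
least `6`, which holds because `t + t⁻¹ ≥ 2` for `t > 0`. -/

section OrderedRing

variable {R : Type*} [CommRing R] {x y z : R}

theorem schur_inequality_of_le_of_le [PartialOrder R] [IsOrderedRing R] (n : ℕ)
    (hz : 0 ≤ z) (hzy : z ≤ y) (hyx : y ≤ x) :
    0 ≤ x ^ n * ((x - y) * (x - z)) + y ^ n * ((y - x) * (y - z)) +
      z ^ n * ((z - x) * (z - y)) := by
  have hy : 0 ≤ y := hz.trans hzy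
  have hx : 0 ≤ x := hy.trans hyx
  have hyz : 0 ≤ y - z := sub_nonneg.2 hzy
  have hxy : 0 ≤ x - y := sub_nonneg.2 hyx
  have hxz : 0 ≤ x - z := sub_nonneg.2 (hzy.trans hyx)
  have pow_mul_sub_le : y ^ n * (y - z) ≤ x ^ n * (x - z) := by gcongr
  calc
    0 ≤ (x - y) * (x ^ n * (x - z) - y ^ n * (y - z)) + z ^ n * ((x - z) * (y - z)) :=
      add_nonneg (mul_nonneg hxy (sub_nonneg.2 pow_mul_sub_le))
        (mul_nonneg (pow_nonneg hz n) (mul_nonneg hxz hyz))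
    _ = _ := by ring

variable [LinearOrder R] [IsOrderedRing R]

theorem schur_inequality (n : ℕ) (hx : 0 ≤ x) (hy : 0 ≤ y) (hz : 0 ≤ z) :
    0 ≤ x ^ n * ((x - y) * (x - z)) + y ^ n * ((y - x) * (y - z)) +
      z ^ n * ((z - x) * (z - y)) := by
  wlog hyx : y ≤ x generalizing x y
  · convert this hy hx (le_of_not_ge hyx) using 1
    ring
  rcases le_total z y with hzy | hyz
  · exact schur_inequality_of_le_of_le n hz hzy hyx
  rcases le_total z x with hzx | hxz
  · convert schur_inequality_of_le_of_le n hy hyz hzx using 1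
    ring
  · convert schur_inequality_of_le_of_le n hy hyx hxz using 1
    ring

end OrderedRing

section OrderedField

variable {K : Type*} [Field K] [LinearOrder K] [IsStrictOrderedRing K] {x y z : K}

theorem two_le_div_add_div (hx : 0 < x) (hy : 0 < y) : 2 ≤ x / y + y / x := by
  rw [div_add_div _ _ hy.ne' hx.ne', le_div_iff₀ (mul_pos hy hx)]
  linarith [two_mul_le_add_sq x y]

theorem six_le_sum_ratios (hx : 0 < x) (hy : 0 < y) (hz : 0 < z) :
    6 ≤ x / y + y / x + x / z + z / x + y / z + z / y := by
  linarith [two_le_div_add_div hx hy, two_le_div_add_div hx hz, two_le_div_add_div hy hz]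

theorem half_sum_ratios_sub_one_le (hx : 0 < x) (hy : 0 < y) (hz : 0 < z) :
    1 / 2 * (x / y + y / x + x / z + z / x + y / z + z / y) - 1 ≤
      (x * y * z + x ^ 3 + y ^ 3 + z ^ 3) / (2 * x * y * z) := by
  have sub_eq_schur :
      (x * y * z + x ^ 3 + y ^ 3 + z ^ 3) / (2 * x * y * z) -
          (1 / 2 * (x / y + y / x + x / z + z / x + y / z + z / y) - 1) =
        (x ^ 1 * ((x - y) * (x - z)) + y ^ 1 * ((y - x) * (y - z)) +
          z ^ 1 * ((z - x) * (z - y))) / (2 * x * y * z) := by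
    field_simp
    ring
  rw [← sub_nonneg, sub_eq_schur]
  exact div_nonneg (schur_inequality 1 hx.le hy.le hz.le) (by positivity)

theorem stmt_19_general (hx : 0 < x) (hy : 0 < y) (hz : 0 < z) :
    (x * y * z + x ^ 3 + y ^ 3 + z ^ 3) / (2 * x * y * z) ≥
      1 / 2 * (x / y + y / x + x / z + z / x + y / z + z / y) - 1 ∧
    1 / 2 * (x / y + y / x + x / z + z / x + y / z + z / y) - 1 ≥
      1 / 3 * (x / y + y / x + x / z + z / x + y / z + z / y) ∧
    1 / 3 * (x / y + y / x + x / z + z / x + y / z + z / y) ≥ 2 := by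
  have six_le := six_le_sum_ratios hx hy hz
  exact ⟨half_sum_ratios_sub_one_le hx hy hz, by linarith, by linarith⟩

end OrderedField

theorem stmt_19 (a b c : ℝ) (ha : 0 < a) (hb : 0 < b) (hc : 0 < c)
    (hab : a < b + c) (hbc : b < a + c) (hca : c < a + b) :
    let ha' := Real.sinh (a / 2)
    let hb' := Real.sinh (b / 2)
    let hc' := Real.sinh (c / 2)
    (ha' * hb' * hc' + ha' ^ 3 + hb' ^ 3 + hc' ^ 3) / (2 * ha' * hb' * hc') ≥
      1 / 2 * (ha' / hb' + hb' / ha' + ha' / hc' + hc' / ha' + hb' / hc' + hc' / hb') - 1 ∧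
    1 / 2 * (ha' / hb' + hb' / ha' + ha' / hc' + hc' / ha' + hb' / hc' + hc' / hb') - 1 ≥
      1 / 3 * (ha' / hb' + hb' / ha' + ha' / hc' + hc' / ha' + hb' / hc' + hc' / hb') ∧
    1 / 3 * (ha' / hb' + hb' / ha' + ha' / hc' + hc' / ha' + hb' / hc' + hc' / hb') ≥ 2 := by
  have sinh_half_pos {t : ℝ} (ht : 0 < t) : 0 < Real.sinh (t / 2) :=
    Real.sinh_pos_iff.2 (half_pos ht)
  exact stmt_19_general (sinh_half_pos ha) (sinh_half_pos hb) (sinh_half_pos hc)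
end
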